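/- In the diffusive regime 0 < p < 3/4, the predictable quadratic variation of the score martingale satisfies (1/log n)·Σ_{k=1}^{n−1} (S_k/k)²/(1 − a²(S_k/k)²) → 1/(3 − 4p) almost surely as n → ∞. -/

import Mathlib

open MeasureTheory ProbabilityTheory Filter Finset
open scoped BoundedContinuousFunction ENNReal NNReal Topology

noncomputable section

variable {Ω : Type*}

/-- Position of the elephant random walk: `S n = X 1 + ⋯ + X n`. -/
def erwS (X : ℕ → Ω → ℝ) (n : ℕ) (ω : Ω) : ℝ :=
  ∑ k ∈ Finset.Icc 1 n, X k ω

/-- `V n = 4 ∑_{k=1}^{n-1} (S k / k)²`, the approximate conditional Fisher information. -/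
def erwV (X : ℕ → Ω → ℝ) (n : ℕ) (ω : Ω) : ℝ :=
  4 * ∑ k ∈ Finset.Icc 1 (n - 1), (erwS X k ω / k) ^ 2

/-- The quasi-maximum likelihood estimator `p̂ n` of the memory parameter. -/
def erwPhat (X : ℕ → Ω → ℝ) (n : ℕ) (ω : Ω) : ℝ :=
  (∑ k ∈ Finset.Icc 1 (n - 1), (erwS X k ω / k) * (X (k + 1) ω + erwS X k ω / k)) /
    (2 * ∑ k ∈ Finset.Icc 1 (n - 1), (erwS X k ω / k) ^ 2)

/-- The elephant random walk hypotheses with memory parameter `p ∈ [0,1]`: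
the steps take values in `{-1, 1}`, are adapted to the filtration `ℱ`
(which plays the role of `σ(X_1, …, X_n)`), and
`E[X_{n+1} | ℱ_n] = (2p - 1) · S_n / n` almost surely. -/
def IsERW {m0 : MeasurableSpace Ω} (μ : Measure Ω) (ℱ : Filtration ℕ m0)
    (X : ℕ → Ω → ℝ) (p : ℝ) : Prop :=
  0 ≤ p ∧ p ≤ 1 ∧
  (∀ n, 1 ≤ n → ∀ ω, X n ω = 1 ∨ X n ω = -1) ∧
  (∀ n, 1 ≤ n → Measurable[ℱ n] (X n)) ∧
  (∀ n, 1 ≤ n → μ[X (n + 1) | ℱ n] =ᵐ[μ] fun ω => (2 * p - 1) * (erwS X n ω / n))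

/-!
Put `a = 2p - 1` and `U n = S n ^ 2 / n`. Expanding the square,
`U (n + 1) = (1 - (1 - 2a) / (n + 1)) U n + 1 / (n + 1) + 2 d n` with martingale differences `d`
satisfying `E[d n ^ 2] = O(E[U n] / n) = O(1 / n)`. Hence `∑ d n / H (n + 1)`, with `H` the harmonic
numbers, is an `L²`-bounded martingale; it converges almost surely, and Kronecker's lemma gives
`∑_{k < n} d k = o(log n)`. The rest is pathwise: the recursion forces `U n = o(log n)`, and summing
it yields `(1 - 2a) ∑_{k < n} U k / (k + 1) ~ log n`, where `1 - 2a = 3 - 4p`. Since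
`(S n / n) ^ 2 = U n / n → 0`, any weight that is continuous at `0` acts as a constant.
-/

section Sequences

theorem kronecker_isLittleO_sum_range {b d : ℕ → ℝ} {L : ℝ} (hb : Monotone b)
    (hb_top : Tendsto b atTop atTop) (hb_ne : ∀ n, b (n + 1) ≠ 0)
    (hL : Tendsto (fun n => ∑ k ∈ range n, d k / b (k + 1)) atTop (𝓝 L)) :
    (fun n => ∑ k ∈ range n, d k) =o[atTop] b := by
  set N : ℕ → ℝ := fun n => ∑ k ∈ range n, d k / b (k + 1) with hN
  have summation_by_parts : ∀ n, ∑ k ∈ range n, d k =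
      b n * (N n - L) - ∑ k ∈ range n, (b (k + 1) - b k) * (N k - L) + b 0 * L := by
    intro n
    induction n with
    | zero => simp [hN]
    | succ n ih =>
      have hd : b (n + 1) * (N (n + 1) - N n) = d n := by
        simp only [hN, sum_range_succ, add_sub_cancel_left]
        exact mul_div_cancel₀ _ (hb_ne n)
      rw [sum_range_succ, sum_range_succ, ih]
      linear_combination -hd
  have hN_zero : (fun n => N n - L) =o[atTop] (fun _ => (1 : ℝ)) :=
    (Asymptotics.isLittleO_one_iff ℝ).2 (by simpa only [sub_self] using hL.sub_const L)
  have h_sum_incr : ∀ n, ∑ k ∈ range n, (b (k + 1) - b k) = b n - b 0 := sum_range_sub b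
  have h_const (C : ℝ) : (fun _ : ℕ => C) =o[atTop] b :=
    Asymptotics.isLittleO_const_left.2 (.inr (tendsto_abs_atTop_atTop.comp hb_top))
  have h_boundary : (fun n => b n * (N n - L)) =o[atTop] b := by
    simpa only [mul_one] using (Asymptotics.isBigO_refl b atTop).mul_isLittleO hN_zero
  have h_average : (fun n => ∑ k ∈ range n, (b (k + 1) - b k) * (N k - L)) =o[atTop] b := by
    have h_incr : (fun k => (b (k + 1) - b k) * (N k - L)) =o[atTop] fun k => b (k + 1) - b k := by
      simpa only [mul_one] using (Asymptotics.isBigO_refl _ atTop).mul_isLittleO hN_zero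
    refine (h_incr.sum_range (fun k => sub_nonneg.2 (hb k.le_succ)) ?_).trans_isBigO ?_
    · simp only [h_sum_incr]
      exact tendsto_atTop_add_const_right _ (-b 0) hb_top
    · simpa only [h_sum_incr] using (Asymptotics.isBigO_refl b atTop).sub (h_const (b 0)).isBigO
  simpa only [summation_by_parts] using (h_boundary.sub h_average).add (h_const (b 0 * L))

theorem isLittleO_of_abs_succ_le_convex_comb {x y t b : ℕ → ℝ} (hb : Monotone b)
    (hb_top : Tendsto b atTop atTop) (ht : ∀ᶠ n in atTop, t n ∈ Set.Icc 0 1)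
    (hx : ∀ᶠ n in atTop, |x (n + 1)| ≤ (1 - t n) * |x n| + t n * |y n|)
    (hy : y =o[atTop] b) : x =o[atTop] b := by
  refine Asymptotics.isLittleO_iff.2 fun ε hε => ?_
  obtain ⟨m, hm⟩ := eventually_atTop.1 <| ht.and <| hx.and <|
    (Asymptotics.isLittleO_iff.1 hy (half_pos hε)).and (hb_top.eventually_ge_atTop 0)
  have h_bound : ∀ n, m ≤ n → |x n| ≤ |x m| + ε / 2 * b n := by
    intro n hmn
    induction n, hmn using Nat.le_induction with
    | base => have := (hm m le_rfl).2.2.2; exact le_add_of_nonneg_right (by positivity)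
    | succ n hmn ih =>
      obtain ⟨⟨ht₀, ht₁⟩, hxn, hyn, hbn⟩ := hm n hmn
      rw [Real.norm_eq_abs, Real.norm_of_nonneg hbn] at hyn
      have hyn' : |y n| ≤ |x m| + ε / 2 * b n := hyn.trans (le_add_of_nonneg_left (abs_nonneg _))
      calc |x (n + 1)| ≤ (1 - t n) * |x n| + t n * |y n| := hxn
        _ ≤ (1 - t n) * (|x m| + ε / 2 * b n) + t n * (|x m| + ε / 2 * b n) := by
          have := sub_nonneg.2 ht₁
          gcongr
        _ = |x m| + ε / 2 * b n := by ring
        _ ≤ |x m| + ε / 2 * b (n + 1) := by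
          gcongr
          exact hb n.le_succ
  filter_upwards [eventually_ge_atTop m, hb_top.eventually_ge_atTop (|x m| / (ε / 2))]
    with n hmn hbn
  rw [Real.norm_eq_abs, Real.norm_of_nonneg (hm n hmn).2.2.2]
  rw [div_le_iff₀ (half_pos hε)] at hbn
  linarith [h_bound n hmn]

theorem tendsto_sum_mul_div_of_tendsto {g r b : ℕ → ℝ} {γ l : ℝ} (hg : 0 ≤ g)
    (hg_top : Tendsto (fun n => ∑ k ∈ range n, g k) atTop atTop)
    (hgb : Tendsto (fun n => (∑ k ∈ range n, g k) / b n) atTop (𝓝 γ))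
    (hr : Tendsto r atTop (𝓝 l)) :
    Tendsto (fun n => (∑ k ∈ range n, g k * r k) / b n) atTop (𝓝 (l * γ)) := by
  have h_error : (fun k => g k * (r k - l)) =o[atTop] g := by
    have hr_zero : (fun k => r k - l) =o[atTop] (fun _ => (1 : ℝ)) :=
      (Asymptotics.isLittleO_one_iff ℝ).2 (by simpa only [sub_self] using hr.sub_const l)
    simpa only [mul_one] using (Asymptotics.isBigO_refl g atTop).mul_isLittleO hr_zero
  have h_ratio := (h_error.sum_range hg hg_top).tendsto_div_nhds_zero
  have h_lim := (h_ratio.add_const l).mul hgb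
  rw [zero_add] at h_lim
  refine h_lim.congr' ?_
  filter_upwards [hg_top.eventually_ne_atTop 0] with n hn
  simp only [mul_sub, sum_sub_distrib, ← sum_mul]
  field_simp
  ring

theorem le_of_succ_le_relaxation {x : ℕ → ℝ} {c m K : ℝ} (hx : ∀ n, 0 ≤ x n) (hx_zero : x 0 ≤ K)
    (hmK : m ≤ K) (hmcK : m ≤ c * K)
    (h_succ : ∀ n : ℕ, x (n + 1) ≤ (1 - c / (n + 1)) * x n + m / (n + 1)) (n : ℕ) : x n ≤ K := by
  induction n with
  | zero => exact hx_zero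
  | succ n ih =>
    have hK : 0 ≤ K := (hx 0).trans hx_zero
    rcases le_total 0 (1 - c / ((n : ℝ) + 1)) with h_coeff | h_coeff
    · calc x (n + 1) ≤ (1 - c / (n + 1)) * x n + m / (n + 1) := h_succ n
        _ ≤ (1 - c / (n + 1)) * K + c * K / (n + 1) := by gcongr
        _ = K := by ring
    · calc x (n + 1) ≤ (1 - c / (n + 1)) * x n + m / (n + 1) := h_succ n
        _ ≤ 0 + K / (n + 1) := by
          gcongr
          exact mul_nonpos_of_nonpos_of_nonneg h_coeff (hx n)
        _ ≤ K := by
          rw [zero_add]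
          exact div_le_self hK (by simp)

theorem summable_sub_div_sq_of_monotone {b : ℕ → ℝ} (hb : Monotone b) (hb_pos : ∀ n, 0 < b n) :
    Summable fun n => (b (n + 1) - b n) / b (n + 1) ^ 2 := by
  have h_telescope (n : ℕ) : (b (n + 1) - b n) / b (n + 1) ^ 2 ≤ 1 / b n - 1 / b (n + 1) := by
    have h₀ := hb_pos n
    have h₁ := hb_pos (n + 1)
    rw [div_sub_div _ _ h₀.ne' h₁.ne', one_mul, mul_one, sq]
    have := sub_nonneg.2 (hb n.le_succ)
    gcongr
    exact hb n.le_succ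
  refine summable_of_sum_range_le (c := 1 / b 0)
    (fun n => div_nonneg (sub_nonneg.2 (hb n.le_succ)) (sq_nonneg _)) fun n => ?_
  calc ∑ k ∈ range n, (b (k + 1) - b k) / b (k + 1) ^ 2
      ≤ ∑ k ∈ range n, (1 / b k - 1 / b (k + 1)) := sum_le_sum fun k _ => h_telescope k
    _ = 1 / b 0 - 1 / b n := sum_range_sub' (fun k => 1 / b k) n
    _ ≤ 1 / b 0 := sub_le_self _ (one_div_nonneg.2 (hb_pos n).le)

end Sequences

section Harmonic

lemma cast_harmonic_succ (n : ℕ) : (harmonic (n + 1) : ℝ) = harmonic n + 1 / ((n : ℝ) + 1) := by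
  simp [harmonic_succ]

lemma monotone_cast_harmonic : Monotone fun n => (harmonic n : ℝ) :=
  monotone_nat_of_le_succ fun n => by
    rw [cast_harmonic_succ]
    exact le_add_of_nonneg_right (by positivity)

lemma cast_harmonic_succ_pos (n : ℕ) : 0 < (harmonic (n + 1) : ℝ) :=
  Rat.cast_pos.2 (harmonic_pos n.succ_ne_zero)

lemma tendsto_cast_harmonic_atTop : Tendsto (fun n => (harmonic n : ℝ)) atTop atTop :=
  tendsto_atTop_mono log_add_one_le_harmonic
    (Real.tendsto_log_atTop.comp (tendsto_natCast_atTop_atTop.comp (tendsto_add_atTop_nat 1)))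

lemma cast_harmonic_nonneg (n : ℕ) : 0 ≤ (harmonic n : ℝ) := by
  simpa using monotone_cast_harmonic n.zero_le

lemma cast_harmonic_le_self (n : ℕ) : (harmonic n : ℝ) ≤ n := by
  rcases n.eq_zero_or_pos with rfl | hn
  · simp
  · linarith [harmonic_le_one_add_log n, Real.log_le_sub_one_of_pos (Nat.cast_pos.2 hn)]

lemma tendsto_cast_harmonic_div_log :
    Tendsto (fun n : ℕ => (harmonic n : ℝ) / Real.log n) atTop (𝓝 1) := by
  have h_log : Tendsto (fun n : ℕ => Real.log n) atTop atTop :=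
    Real.tendsto_log_atTop.comp tendsto_natCast_atTop_atTop
  have h_lim := (Real.tendsto_harmonic_sub_log.div_atTop h_log).add_const 1
  rw [zero_add] at h_lim
  refine h_lim.congr' ?_
  filter_upwards [h_log.eventually_gt_atTop 0] with n hn
  field_simp
  ring

lemma summable_one_div_succ_mul_harmonic_sq :
    Summable fun n : ℕ => 1 / (((n : ℝ) + 1) * (harmonic (n + 1) : ℝ) ^ 2) := by
  have h_summable := summable_sub_div_sq_of_monotone (b := fun n => (harmonic (n + 1) : ℝ))
    (fun _ _ h => monotone_cast_harmonic (Nat.succ_le_succ h)) cast_harmonic_succ_pos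
  refine (summable_nat_add_iff 1).1 (h_summable.congr fun n => ?_)
  rw [cast_harmonic_succ (n + 1), add_sub_cancel_left, div_div]

end Harmonic

section MartingaleDifferences

variable {m0 : MeasurableSpace Ω} {μ : Measure Ω} {ℱ : Filtration ℕ m0} {ξ : ℕ → Ω → ℝ}

/-- `ξ` is a sequence of square-integrable martingale differences: `ξ n` is the increment of a
martingale from time `n` to time `n + 1`. -/
structure IsSqMartingaleDiff (μ : Measure Ω) (ℱ : Filtration ℕ m0) (ξ : ℕ → Ω → ℝ) : Prop where
  stronglyMeasurable : ∀ n, StronglyMeasurable[ℱ (n + 1)] (ξ n)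
  memLp : ∀ n, MemLp (ξ n) 2 μ
  condExp_ae_eq_zero : ∀ n, μ[ξ n | ℱ n] =ᵐ[μ] 0

namespace IsSqMartingaleDiff

theorem const_smul (hξ : IsSqMartingaleDiff μ ℱ ξ) (c : ℕ → ℝ) :
    IsSqMartingaleDiff μ ℱ fun n => c n • ξ n where
  stronglyMeasurable n := (hξ.stronglyMeasurable n).const_smul (c n)
  memLp n := (hξ.memLp n).const_smul (c n)
  condExp_ae_eq_zero n := by
    filter_upwards [condExp_smul (c n) (ξ n) (ℱ n) (μ := μ), hξ.condExp_ae_eq_zero n]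
      with ω h_cond h_zero
    rw [h_cond, Pi.smul_apply, h_zero, Pi.zero_apply, smul_zero]

theorem stronglyMeasurable_sum (hξ : IsSqMartingaleDiff μ ℱ ξ) (n : ℕ) :
    StronglyMeasurable[ℱ n] (∑ k ∈ range n, ξ k) :=
  Finset.stronglyMeasurable_sum _ fun k hk =>
    (hξ.stronglyMeasurable k).mono (ℱ.mono (Nat.succ_le_of_lt (mem_range.1 hk)))

theorem memLp_sum (hξ : IsSqMartingaleDiff μ ℱ ξ) (n : ℕ) :
    MemLp (∑ k ∈ range n, ξ k) 2 μ :=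
  memLp_finsetSum' _ fun k _ => hξ.memLp k

variable [IsFiniteMeasure μ]

theorem integral_mul_eq_zero (hξ : IsSqMartingaleDiff μ ℱ ξ) {n : ℕ} {Y : Ω → ℝ}
    (hY : StronglyMeasurable[ℱ n] Y) (hY_memLp : MemLp Y 2 μ) :
    ∫ ω, Y ω * ξ n ω ∂μ = 0 := by
  have h_cond : μ[Y * ξ n | ℱ n] =ᵐ[μ] 0 := by
    filter_upwards [condExp_mul_of_stronglyMeasurable_left hY (hY_memLp.integrable_mul (hξ.memLp n))
      ((hξ.memLp n).integrable one_le_two), hξ.condExp_ae_eq_zero n] with ω h_pull h_zero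
    rw [h_pull, Pi.mul_apply, h_zero, Pi.zero_apply, mul_zero]
  calc ∫ ω, Y ω * ξ n ω ∂μ = ∫ ω, (μ[Y * ξ n | ℱ n]) ω ∂μ := (integral_condExp (ℱ.le n)).symm
    _ = 0 := integral_eq_zero_of_ae h_cond

theorem integral_eq_zero (hξ : IsSqMartingaleDiff μ ℱ ξ) (n : ℕ) : ∫ ω, ξ n ω ∂μ = 0 := by
  simpa only [one_mul] using
    hξ.integral_mul_eq_zero (n := n) stronglyMeasurable_const (memLp_const (1 : ℝ))

theorem martingale_sum (hξ : IsSqMartingaleDiff μ ℱ ξ) :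
    Martingale (fun n => ∑ k ∈ range n, ξ k) ℱ μ := by
  refine martingale_of_condExp_sub_eq_zero_nat hξ.stronglyMeasurable_sum
    (fun n => (hξ.memLp_sum n).integrable one_le_two) fun n => ?_
  rw [sum_range_succ, add_sub_cancel_left]
  exact hξ.condExp_ae_eq_zero n

theorem integral_sum_sq (hξ : IsSqMartingaleDiff μ ℱ ξ) (n : ℕ) :
    ∫ ω, (∑ k ∈ range n, ξ k) ω ^ 2 ∂μ = ∑ k ∈ range n, ∫ ω, ξ k ω ^ 2 ∂μ := by
  induction n with
  | zero => simp
  | succ n ih =>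
    set M := ∑ k ∈ range n, ξ k
    have hM : MemLp M 2 μ := hξ.memLp_sum n
    have h_cross : Integrable (fun ω => 2 * (M ω * ξ n ω)) μ :=
      (hM.integrable_mul (hξ.memLp n)).const_mul 2
    calc ∫ ω, (∑ k ∈ range (n + 1), ξ k) ω ^ 2 ∂μ
        = ∫ ω, M ω ^ 2 + 2 * (M ω * ξ n ω) + ξ n ω ^ 2 ∂μ := by
          refine integral_congr_ae (.of_forall fun ω => ?_)
          simp only [sum_range_succ, Pi.add_apply]
          ring
      _ = ∫ ω, M ω ^ 2 ∂μ + 2 * ∫ ω, M ω * ξ n ω ∂μ + ∫ ω, ξ n ω ^ 2 ∂μ := by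
          rw [integral_add (by exact hM.integrable_sq.add h_cross) (hξ.memLp n).integrable_sq,
            integral_add hM.integrable_sq h_cross, integral_const_mul]
      _ = ∑ k ∈ range (n + 1), ∫ ω, ξ k ω ^ 2 ∂μ := by
          rw [hξ.integral_mul_eq_zero (hξ.stronglyMeasurable_sum n) hM, ih, sum_range_succ]
          ring

theorem ae_exists_tendsto_sum (hξ : IsSqMartingaleDiff μ ℱ ξ)
    (h_sum : Summable fun n => ∫ ω, ξ n ω ^ 2 ∂μ) :
    ∀ᵐ ω ∂μ, ∃ L, Tendsto (fun n => ∑ k ∈ range n, ξ k ω) atTop (𝓝 L) := by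
  set C := μ.real Set.univ + ∑' n, ∫ ω, ξ n ω ^ 2 ∂μ
  have h_L1 (n : ℕ) : eLpNorm (∑ k ∈ range n, ξ k) 1 μ ≤ C.toNNReal := by
    set M := ∑ k ∈ range n, ξ k
    have hM : MemLp M 2 μ := hξ.memLp_sum n
    have hM_int : Integrable M μ := hM.integrable one_le_two
    rw [eLpNorm_one_eq_lintegral_enorm, ← ofReal_integral_norm_eq_lintegral_enorm hM_int]
    refine ENNReal.ofReal_le_ofReal ?_
    calc ∫ ω, ‖M ω‖ ∂μ ≤ ∫ ω, 1 + M ω ^ 2 ∂μ := by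
          refine integral_mono hM_int.norm ((integrable_const 1).add hM.integrable_sq) fun ω => ?_
          simp only [Real.norm_eq_abs, ← sq_abs (M ω)]
          nlinarith only [sq_nonneg (|M ω| - 1), abs_nonneg (M ω)]
      _ = μ.real Set.univ + ∑ k ∈ range n, ∫ ω, ξ k ω ^ 2 ∂μ := by
          rw [integral_add (integrable_const 1) hM.integrable_sq, hξ.integral_sum_sq,
            integral_const, smul_eq_mul, mul_one]
      _ ≤ C := by
          exact add_le_add_right
            (h_sum.sum_le_tsum _ fun k _ => integral_nonneg fun ω => sq_nonneg _) _
  simpa only [Finset.sum_apply] using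
    hξ.martingale_sum.submartingale.exists_ae_tendsto_of_bdd h_L1

end IsSqMartingaleDiff

end MartingaleDifferences

section UnitStepWalk

/-- Paths of nearest-neighbour walks on `ℤ` started at the origin, encoded as real sequences. -/
structure IsUnitStepWalk (S : ℕ → ℝ) : Prop where
  zero : S 0 = 0
  abs_step : ∀ n, |S (n + 1) - S n| = 1

/-- The diffusively rescaled energy `S n ^ 2 / n` of a path, equal to `0` at time `0`. -/
def scaledSq (S : ℕ → ℝ) (n : ℕ) : ℝ :=
  S n ^ 2 / n

/-- Half the martingale increment of `n ↦ scaledSq S n` when the step following time `n` has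
conditional mean `a * (S n / n)`. -/
def scaledSqNoise (a : ℝ) (S : ℕ → ℝ) (n : ℕ) : ℝ :=
  S n / (n + 1) * (S (n + 1) - S n - a * (S n / n))

lemma scaledSq_nonneg (S : ℕ → ℝ) (n : ℕ) : 0 ≤ scaledSq S n :=
  div_nonneg (sq_nonneg _) n.cast_nonneg

namespace IsUnitStepWalk

variable {S : ℕ → ℝ} {a : ℝ}

theorem abs_le (hS : IsUnitStepWalk S) (n : ℕ) : |S n| ≤ n := by
  induction n with
  | zero => simp [hS.zero]
  | succ n ih =>
    calc |S (n + 1)| = |S (n + 1) - S n + S n| := by rw [sub_add_cancel]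
      _ ≤ |S (n + 1) - S n| + |S n| := abs_add_le _ _
      _ ≤ (n + 1 : ℕ) := by
        rw [hS.abs_step]
        push_cast
        linarith

theorem abs_div_le_one (hS : IsUnitStepWalk S) (n : ℕ) : |S n / n| ≤ 1 := by
  rw [abs_div, Nat.abs_cast]
  exact div_le_one_of_le₀ (hS.abs_le n) n.cast_nonneg

theorem scaledSq_zero (hS : IsUnitStepWalk S) : scaledSq S 0 = 0 := by
  simp [scaledSq, hS.zero]

theorem scaledSq_le (hS : IsUnitStepWalk S) (n : ℕ) : scaledSq S n ≤ n := by
  refine div_le_of_le_mul₀ n.cast_nonneg n.cast_nonneg ?_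
  rw [← sq_abs, ← sq]
  exact pow_le_pow_left₀ (abs_nonneg _) (hS.abs_le n) 2

theorem abs_innovation_le (hS : IsUnitStepWalk S) (ha : |a| ≤ 1) (n : ℕ) :
    |S (n + 1) - S n - a * (S n / n)| ≤ 2 :=
  calc |S (n + 1) - S n - a * (S n / n)| ≤ |S (n + 1) - S n| + |a * (S n / n)| := abs_sub _ _
    _ ≤ 1 + 1 := by
      rw [abs_mul]
      exact add_le_add (hS.abs_step n).le
        (mul_le_one₀ ha (abs_nonneg _) (hS.abs_div_le_one n))
    _ = 2 := one_add_one_eq_two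

theorem scaledSqNoise_sq_le (hS : IsUnitStepWalk S) (ha : |a| ≤ 1) (n : ℕ) :
    scaledSqNoise a S n ^ 2 ≤ 4 * (scaledSq S n / (n + 1)) := by
  have h_innovation : (S (n + 1) - S n - a * (S n / n)) ^ 2 ≤ 2 ^ 2 :=
    sq_le_sq.2 ((hS.abs_innovation_le ha n).trans_eq (abs_two).symm)
  have h_weight : (S n / (n + 1)) ^ 2 ≤ scaledSq S n / (n + 1) := by
    rcases n.eq_zero_or_pos with rfl | hn
    · simp [hS.zero, scaledSq]
    · have : (0 : ℝ) < n := Nat.cast_pos.2 hn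
      rw [scaledSq, div_pow, div_div, sq ((n : ℝ) + 1)]
      gcongr
      exact le_add_of_nonneg_right zero_le_one
  calc scaledSqNoise a S n ^ 2
      = (S n / (n + 1)) ^ 2 * (S (n + 1) - S n - a * (S n / n)) ^ 2 := mul_pow _ _ _
    _ ≤ scaledSq S n / (n + 1) * 2 ^ 2 := by
      gcongr
      exact div_nonneg (scaledSq_nonneg S n) (by positivity)
    _ = 4 * (scaledSq S n / (n + 1)) := by ring

theorem scaledSq_succ (hS : IsUnitStepWalk S) (a : ℝ) (n : ℕ) :
    scaledSq S (n + 1) = (1 - (1 - 2 * a) / (n + 1)) * scaledSq S n + 1 / (n + 1) +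
      2 * scaledSqNoise a S n := by
  have h_step : (S (n + 1) - S n) ^ 2 = 1 := by rw [← sq_abs, hS.abs_step, one_pow]
  rcases n.eq_zero_or_pos with rfl | hn
  · simpa [scaledSq, scaledSqNoise, hS.zero] using h_step
  · have : (0 : ℝ) < n := Nat.cast_pos.2 hn
    simp only [scaledSq, scaledSqNoise]
    push_cast
    field_simp
    linear_combination n * h_step

theorem scaledSq_add_sum_eq (hS : IsUnitStepWalk S) (a : ℝ) (n : ℕ) :
    scaledSq S n + (1 - 2 * a) * ∑ k ∈ range n, scaledSq S k / (k + 1) =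
      harmonic n + 2 * ∑ k ∈ range n, scaledSqNoise a S k := by
  induction n with
  | zero => simp [hS.scaledSq_zero]
  | succ n ih =>
    rw [sum_range_succ, sum_range_succ, cast_harmonic_succ, hS.scaledSq_succ a]
    linear_combination ih

section Diffusive

variable (ha : a < 1 / 2)
  (h_noise : (fun n => ∑ k ∈ range n, scaledSqNoise a S k) =o[atTop] fun n => (harmonic n : ℝ))

include ha h_noise

/- Removing the accumulated noise turns the recursion into averaging towards a target that is
itself `o(log n)`. -/
theorem scaledSq_isLittleO_harmonic (hS : IsUnitStepWalk S) :
    scaledSq S =o[atTop] fun n => (harmonic n : ℝ) := by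
  set M : ℕ → ℝ := fun n => ∑ k ∈ range n, scaledSqNoise a S k with hM
  set c := 1 - 2 * a with hc
  have hc_pos : 0 < c := by linarith
  have h_target : (fun n => 1 / c - 2 * M n) =o[atTop] fun n => (harmonic n : ℝ) :=
    (Asymptotics.isLittleO_const_left.2
      (.inr (tendsto_abs_atTop_atTop.comp tendsto_cast_harmonic_atTop))).sub
        (h_noise.const_mul_left 2)
  have h_coeff : ∀ᶠ n : ℕ in atTop, c / ((n : ℝ) + 1) ∈ Set.Icc 0 1 := by
    filter_upwards [tendsto_natCast_atTop_atTop.eventually_ge_atTop c] with n hn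
    exact ⟨by positivity, div_le_one_of_le₀ (by linarith) (by positivity)⟩
  have h_succ (n : ℕ) : scaledSq S (n + 1) - 2 * M (n + 1) =
      (1 - c / (n + 1)) * (scaledSq S n - 2 * M n) + c / (n + 1) * (1 / c - 2 * M n) := by
    simp only [hM]
    rw [hS.scaledSq_succ a, sum_range_succ, ← hc]
    field_simp
    ring
  have h_denoised : (fun n => scaledSq S n - 2 * M n) =o[atTop] fun n => (harmonic n : ℝ) := by
    refine isLittleO_of_abs_succ_le_convex_comb monotone_cast_harmonic
      tendsto_cast_harmonic_atTop h_coeff ?_ h_target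
    filter_upwards [h_coeff] with n hn
    rw [h_succ]
    refine (abs_add_le _ _).trans_eq ?_
    rw [abs_mul, abs_mul, abs_of_nonneg (sub_nonneg.2 hn.2), abs_of_nonneg hn.1]
  simpa only [sub_add_cancel] using h_denoised.add (h_noise.const_mul_left 2)

theorem tendsto_sum_scaledSq_div_harmonic (hS : IsUnitStepWalk S) :
    Tendsto (fun n : ℕ => (∑ k ∈ range n, scaledSq S k / (k + 1)) / harmonic n) atTop
      (𝓝 (1 / (1 - 2 * a))) := by
  have hc_pos : 0 < 1 - 2 * a := by linarith
  have h_lim := (((h_noise.tendsto_div_nhds_zero.const_mul 2).sub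
    (hS.scaledSq_isLittleO_harmonic ha h_noise).tendsto_div_nhds_zero).const_add 1).div_const
      (1 - 2 * a)
  rw [mul_zero, sub_zero, add_zero] at h_lim
  refine h_lim.congr' ?_
  filter_upwards [tendsto_cast_harmonic_atTop.eventually_gt_atTop 0] with n hn
  field_simp
  linear_combination -hS.scaledSq_add_sum_eq a n

theorem tendsto_sum_scaledSq_atTop (hS : IsUnitStepWalk S) :
    Tendsto (fun n : ℕ => ∑ k ∈ range n, scaledSq S k / ((k : ℝ) + 1)) atTop atTop := by
  have h_limit_pos : 0 < 1 / (1 - 2 * a) := one_div_pos.2 (by linarith)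
  refine ((hS.tendsto_sum_scaledSq_div_harmonic ha h_noise).pos_mul_atTop h_limit_pos
    tendsto_cast_harmonic_atTop).congr' ?_
  filter_upwards [tendsto_cast_harmonic_atTop.eventually_ne_atTop 0] with n hn
  exact div_mul_cancel₀ _ hn

theorem tendsto_div_self_zero (hS : IsUnitStepWalk S) :
    Tendsto (fun n : ℕ => S n / n) atTop (𝓝 0) := by
  have h_harmonic : (fun n => (harmonic n : ℝ)) =O[atTop] fun n : ℕ => (n : ℝ) :=
    .of_norm_eventuallyLE <| .of_forall fun n =>
      (Real.norm_of_nonneg (cast_harmonic_nonneg n)).trans_le (cast_harmonic_le_self n)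
  have h_sq : Tendsto (fun n : ℕ => (S n / n) ^ 2) atTop (𝓝 0) :=
    ((hS.scaledSq_isLittleO_harmonic ha h_noise).trans_isBigO
      h_harmonic).tendsto_div_nhds_zero.congr fun n => by
        rw [scaledSq, div_div, ← sq, div_pow]
  have h_abs := h_sq.sqrt
  simp only [Real.sqrt_sq_eq_abs, Real.sqrt_zero] at h_abs
  exact (tendsto_zero_iff_abs_tendsto_zero _).2 h_abs

theorem tendsto_sum_sq_mul_div_log (hS : IsUnitStepWalk S) {w : ℝ → ℝ} (hw : ContinuousAt w 0) :
    Tendsto (fun n : ℕ => (1 / Real.log n) *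
        ∑ k ∈ Finset.Icc 1 (n - 1), (S k / k) ^ 2 * w (S k / k))
      atTop (𝓝 (w 0 / (1 - 2 * a))) := by
  have h_weight : Tendsto (fun k : ℕ => (1 + 1 / (k : ℝ)) * w (S k / k)) atTop (𝓝 (w 0)) := by
    simpa only [add_zero, one_mul, Function.comp_def] using
      ((tendsto_one_div_atTop_nhds_zero_nat (𝕜 := ℝ)).const_add 1).mul
        (hw.tendsto.comp (hS.tendsto_div_self_zero ha h_noise))
  have h_term (k : ℕ) : scaledSq S k / (k + 1) * ((1 + 1 / (k : ℝ)) * w (S k / k)) =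
      (S k / k) ^ 2 * w (S k / k) := by
    rcases k.eq_zero_or_pos with rfl | hk
    · simp [hS.scaledSq_zero]
    · have : (0 : ℝ) < k := Nat.cast_pos.2 hk
      rw [scaledSq]
      field_simp
  have h_range (n : ℕ) : ∑ k ∈ Finset.Icc 1 (n - 1), (S k / k) ^ 2 * w (S k / k) =
      ∑ k ∈ range n, (S k / k) ^ 2 * w (S k / k) := by
    refine sum_subset (fun k hk => ?_) fun k hk hk' => ?_
    · rw [Finset.mem_Icc] at hk
      exact mem_range.2 (by omega)
    · rw [mem_range] at hk
      obtain rfl : k = 0 := by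
        rw [Finset.mem_Icc] at hk'
        omega
      simp [hS.zero]
  have h_lim := (tendsto_sum_mul_div_of_tendsto
    (fun k => div_nonneg (scaledSq_nonneg S k) (by positivity))
    (hS.tendsto_sum_scaledSq_atTop ha h_noise)
    (hS.tendsto_sum_scaledSq_div_harmonic ha h_noise) h_weight).mul tendsto_cast_harmonic_div_log
  simp only [h_term, ← h_range, mul_one_div, mul_one] at h_lim
  refine h_lim.congr' ?_
  filter_upwards [tendsto_cast_harmonic_atTop.eventually_ne_atTop 0] with n hn
  field_simp

end Diffusive

end IsUnitStepWalk

end UnitStepWalk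

section ElephantRandomWalk

variable {m0 : MeasurableSpace Ω} {μ : Measure Ω} {ℱ : Filtration ℕ m0} {X : ℕ → Ω → ℝ} {p : ℝ}

lemma erwS_zero (X : ℕ → Ω → ℝ) (ω : Ω) : erwS X 0 ω = 0 := by simp [erwS]

lemma erwS_succ (X : ℕ → Ω → ℝ) (n : ℕ) (ω : Ω) :
    erwS X (n + 1) ω = erwS X n ω + X (n + 1) ω :=
  sum_Icc_succ_top (Nat.le_add_left 1 n) _

namespace IsERW

theorem abs_memory_le_one (h : IsERW μ ℱ X p) : |2 * p - 1| ≤ 1 :=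
  abs_le.2 ⟨by linarith only [h.1], by linarith only [h.2.1]⟩

theorem abs_step (h : IsERW μ ℱ X p) (n : ℕ) (ω : Ω) : |X (n + 1) ω| = 1 := by
  rcases h.2.2.1 (n + 1) (Nat.le_add_left 1 n) ω with h_eq | h_eq <;> simp [h_eq]

theorem measurable_step (h : IsERW μ ℱ X p) (n : ℕ) : Measurable[ℱ (n + 1)] (X (n + 1)) :=
  h.2.2.2.1 (n + 1) (Nat.le_add_left 1 n)

theorem condExp_step (h : IsERW μ ℱ X p) {n : ℕ} (hn : 1 ≤ n) :
    μ[X (n + 1) | ℱ n] =ᵐ[μ] fun ω => (2 * p - 1) * (erwS X n ω / n) :=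
  h.2.2.2.2 n hn

theorem isUnitStepWalk (h : IsERW μ ℱ X p) (ω : Ω) : IsUnitStepWalk fun n => erwS X n ω where
  zero := erwS_zero X ω
  abs_step n := by rw [erwS_succ, add_sub_cancel_left, h.abs_step]

theorem measurable_erwS (h : IsERW μ ℱ X p) (n : ℕ) : Measurable[ℱ n] (erwS X n) :=
  Finset.measurable_fun_sum _ fun k hk =>
    (h.2.2.2.1 k (Finset.mem_Icc.1 hk).1).mono (ℱ.mono (Finset.mem_Icc.1 hk).2) le_rfl

theorem measurable_scaledSqNoise (h : IsERW μ ℱ X p) (a : ℝ) (n : ℕ) :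
    Measurable[ℱ (n + 1)] fun ω => scaledSqNoise a (erwS X · ω) n := by
  have hS := (h.measurable_erwS n).mono (ℱ.mono n.le_succ) le_rfl
  exact (hS.div_const _).mul
    (((h.measurable_erwS (n + 1)).sub hS).sub ((hS.div_const _).const_mul a))

variable [IsFiniteMeasure μ]

theorem integrable_step (h : IsERW μ ℱ X p) (n : ℕ) : Integrable (X (n + 1)) μ :=
  .of_bound ((h.measurable_step n).mono (ℱ.le _) le_rfl).aestronglyMeasurable 1
    (.of_forall fun ω => (h.abs_step n ω).le)

theorem integrable_erwS (h : IsERW μ ℱ X p) (n : ℕ) : Integrable (erwS X n) μ :=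
  .of_bound ((h.measurable_erwS n).mono (ℱ.le _) le_rfl).aestronglyMeasurable n
    (.of_forall fun ω => (h.isUnitStepWalk ω).abs_le n)

theorem integrable_scaledSq (h : IsERW μ ℱ X p) (n : ℕ) :
    Integrable (fun ω => scaledSq (erwS X · ω) n) μ := by
  refine .of_bound (((h.measurable_erwS n).mono (ℱ.le _) le_rfl).pow_const 2
    |>.div_const _).aestronglyMeasurable n (.of_forall fun ω => ?_)
  rw [Real.norm_of_nonneg (scaledSq_nonneg _ n)]
  exact (h.isUnitStepWalk ω).scaledSq_le n

theorem memLp_scaledSqNoise (h : IsERW μ ℱ X p) (n : ℕ) :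
    MemLp (fun ω => scaledSqNoise (2 * p - 1) (erwS X · ω) n) 2 μ := by
  have h_meas := (h.measurable_scaledSqNoise (2 * p - 1) n).mono (ℱ.le _) le_rfl
  refine (memLp_two_iff_integrable_sq h_meas.aestronglyMeasurable).2 <|
    (((h.integrable_scaledSq n).div_const ((n : ℝ) + 1)).const_mul 4).mono'
      (h_meas.pow_const 2).aestronglyMeasurable (.of_forall fun ω => ?_)
  rw [Real.norm_of_nonneg (sq_nonneg _)]
  exact (h.isUnitStepWalk ω).scaledSqNoise_sq_le h.abs_memory_le_one n

theorem condExp_innovation_ae_eq_zero (h : IsERW μ ℱ X p) {n : ℕ} (hn : 1 ≤ n) :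
    μ[fun ω => X (n + 1) ω - (2 * p - 1) * (erwS X n ω / n) | ℱ n] =ᵐ[μ] 0 := by
  have h_drift_meas : StronglyMeasurable[ℱ n] fun ω => (2 * p - 1) * (erwS X n ω / n) :=
    (((h.measurable_erwS n).div_const _).const_mul _).stronglyMeasurable
  have h_drift_int : Integrable (fun ω => (2 * p - 1) * (erwS X n ω / n)) μ :=
    ((h.integrable_erwS n).div_const _).const_mul _
  refine (condExp_sub (h.integrable_step n) h_drift_int _).trans ?_
  rw [condExp_of_stronglyMeasurable (ℱ.le n) h_drift_meas h_drift_int]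
  filter_upwards [h.condExp_step hn] with ω hω
  rw [Pi.sub_apply, hω, sub_self, Pi.zero_apply]

theorem condExp_scaledSqNoise_ae_eq_zero (h : IsERW μ ℱ X p) (n : ℕ) :
    μ[fun ω => scaledSqNoise (2 * p - 1) (erwS X · ω) n | ℱ n] =ᵐ[μ] 0 := by
  have h_factor : (fun ω => scaledSqNoise (2 * p - 1) (erwS X · ω) n) =
      (fun ω => erwS X n ω / (n + 1)) *
        fun ω => X (n + 1) ω - (2 * p - 1) * (erwS X n ω / n) := by
    ext ω
    rw [scaledSqNoise, erwS_succ, add_sub_cancel_left, Pi.mul_apply]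
  -- The model says nothing about the mean of the first step, but its weight `S 0` vanishes.
  rcases n.eq_zero_or_pos with rfl | hn
  · have h_zero : (fun ω => scaledSqNoise (2 * p - 1) (erwS X · ω) 0) = 0 := by
      ext ω
      simp [scaledSqNoise, erwS_zero]
    rw [h_zero, condExp_zero]
  · have h_weight : StronglyMeasurable[ℱ n] fun ω => erwS X n ω / (n + 1) :=
      ((h.measurable_erwS n).div_const _).stronglyMeasurable
    have h_innovation_int :
        Integrable (fun ω => X (n + 1) ω - (2 * p - 1) * (erwS X n ω / n)) μ :=
      (h.integrable_step n).sub (((h.integrable_erwS n).div_const _).const_mul _)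
    have h_noise_int := (h.memLp_scaledSqNoise n).integrable one_le_two
    rw [h_factor] at h_noise_int ⊢
    filter_upwards [condExp_mul_of_stronglyMeasurable_left h_weight h_noise_int h_innovation_int,
      h.condExp_innovation_ae_eq_zero hn] with ω h_pull h_zero
    rw [h_pull, Pi.mul_apply, h_zero, Pi.zero_apply, mul_zero]

theorem isSqMartingaleDiff_scaledSqNoise (h : IsERW μ ℱ X p) :
    IsSqMartingaleDiff μ ℱ
      fun n ω => scaledSqNoise (2 * p - 1) (erwS X · ω) n where
  stronglyMeasurable n := (h.measurable_scaledSqNoise _ n).stronglyMeasurable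
  memLp := h.memLp_scaledSqNoise
  condExp_ae_eq_zero := h.condExp_scaledSqNoise_ae_eq_zero

theorem integral_scaledSq_succ (h : IsERW μ ℱ X p) (n : ℕ) :
    ∫ ω, scaledSq (erwS X · ω) (n + 1) ∂μ =
      (1 - (3 - 4 * p) / (n + 1)) * ∫ ω, scaledSq (erwS X · ω) n ∂μ +
        μ.real Set.univ / (n + 1) := by
  have h_drift := ((h.integrable_scaledSq n).const_mul (1 - (3 - 4 * p) / (n + 1))).add
    (integrable_const (1 / ((n : ℝ) + 1)))
  have h_noise := ((h.memLp_scaledSqNoise n).integrable one_le_two).const_mul 2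
  have h_memory : 1 - 2 * (2 * p - 1) = 3 - 4 * p := by ring
  simp only [(h.isUnitStepWalk _).scaledSq_succ (2 * p - 1), h_memory]
  rw [integral_add (by exact h_drift) h_noise,
    integral_add ((h.integrable_scaledSq n).const_mul _) (integrable_const _),
    integral_const_mul, integral_const_mul, h.isSqMartingaleDiff_scaledSqNoise.integral_eq_zero,
    mul_zero, add_zero, integral_const, smul_eq_mul, mul_one_div]

theorem exists_integral_scaledSq_le (h : IsERW μ ℱ X p) (hp : p < 3 / 4) :
    ∃ K, ∀ n, ∫ ω, scaledSq (erwS X · ω) n ∂μ ≤ K := by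
  have hc : 0 < 3 - 4 * p := by linarith
  set m := μ.real Set.univ
  have hm : 0 ≤ m := measureReal_nonneg
  refine ⟨max m (m / (3 - 4 * p)), le_of_succ_le_relaxation
    (fun n => integral_nonneg fun ω => scaledSq_nonneg _ n) ?_ (le_max_left _ _) ?_
    fun n => (h.integral_scaledSq_succ n).le⟩
  · simp only [(h.isUnitStepWalk _).scaledSq_zero, integral_zero]
    exact hm.trans (le_max_left _ _)
  · exact (div_le_iff₀' hc).1 (le_max_right _ _)

theorem summable_integral_smul_scaledSqNoise_sq (h : IsERW μ ℱ X p) (hp : p < 3 / 4) :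
    Summable fun n => ∫ ω, ((harmonic (n + 1) : ℝ)⁻¹ •
      fun ω => scaledSqNoise (2 * p - 1) (erwS X · ω) n) ω ^ 2 ∂μ := by
  obtain ⟨K, hK⟩ := h.exists_integral_scaledSq_le hp
  have h_noise (n : ℕ) :
      ∫ ω, scaledSqNoise (2 * p - 1) (erwS X · ω) n ^ 2 ∂μ ≤ 4 * (K / (n + 1)) :=
    calc ∫ ω, scaledSqNoise (2 * p - 1) (erwS X · ω) n ^ 2 ∂μ
        ≤ ∫ ω, 4 * (scaledSq (erwS X · ω) n / (n + 1)) ∂μ :=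
          integral_mono (h.memLp_scaledSqNoise n).integrable_sq
            (((h.integrable_scaledSq n).div_const _).const_mul 4)
            fun ω => (h.isUnitStepWalk ω).scaledSqNoise_sq_le h.abs_memory_le_one n
      _ ≤ 4 * (K / (n + 1)) := by
          rw [integral_const_mul, integral_div]
          gcongr
          exact hK n
  refine .of_nonneg_of_le (fun n => integral_nonneg fun ω => sq_nonneg _) (fun n => ?_)
    (summable_one_div_succ_mul_harmonic_sq.mul_left (4 * K))
  simp only [Pi.smul_apply, smul_eq_mul, mul_pow, integral_const_mul]
  calc ((harmonic (n + 1) : ℝ)⁻¹) ^ 2 *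
        ∫ ω, scaledSqNoise (2 * p - 1) (erwS X · ω) n ^ 2 ∂μ
      ≤ ((harmonic (n + 1) : ℝ)⁻¹) ^ 2 * (4 * (K / (n + 1))) := by
        gcongr
        exact h_noise n
    _ = 4 * K * (1 / ((n + 1) * (harmonic (n + 1) : ℝ) ^ 2)) := by
        rw [inv_pow, one_div, mul_inv]
        ring

theorem ae_sum_scaledSqNoise_isLittleO_harmonic (h : IsERW μ ℱ X p) (hp : p < 3 / 4) :
    ∀ᵐ ω ∂μ, (fun n => ∑ k ∈ range n, scaledSqNoise (2 * p - 1) (erwS X · ω) k)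
      =o[atTop] fun n => (harmonic n : ℝ) := by
  have h_diff := h.isSqMartingaleDiff_scaledSqNoise.const_smul fun n => (harmonic (n + 1) : ℝ)⁻¹
  filter_upwards [h_diff.ae_exists_tendsto_sum (h.summable_integral_smul_scaledSqNoise_sq hp)]
    with ω ⟨L, hL⟩
  refine kronecker_isLittleO_sum_range monotone_cast_harmonic tendsto_cast_harmonic_atTop
    (fun n => (cast_harmonic_succ_pos n).ne') (L := L) ?_
  simpa only [Pi.smul_apply, smul_eq_mul, ← div_eq_inv_mul] using hL

end IsERW

end ElephantRandomWalk

theorem erw_score_qv_diffusive_general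
    {m0 : MeasurableSpace Ω} (μ : Measure Ω) [IsFiniteMeasure μ]
    (ℱ : Filtration ℕ m0) (X : ℕ → Ω → ℝ) (p : ℝ)
    (hERW : IsERW μ ℱ X p) (hp : p < 3 / 4) {w : ℝ → ℝ} (hw : ContinuousAt w 0) :
    ∀ᵐ ω ∂μ, Tendsto (fun n : ℕ => (1 / Real.log n) *
        ∑ k ∈ Finset.Icc 1 (n - 1), (erwS X k ω / k) ^ 2 * w (erwS X k ω / k))
      atTop (𝓝 (w 0 / (3 - 4 * p))) := by
  have h_memory : 3 - 4 * p = 1 - 2 * (2 * p - 1) := by ring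
  filter_upwards [hERW.ae_sum_scaledSqNoise_isLittleO_harmonic hp] with ω h_noise
  rw [h_memory]
  exact (hERW.isUnitStepWalk ω).tendsto_sum_sq_mul_div_log (by linarith) h_noise hw

/-- In the diffusive regime `0 < p < 3/4`, the predictable quadratic variation of the
score martingale satisfies
`(1/log n) ∑_{k=1}^{n-1} (S_k/k)² / (1 - a² (S_k/k)²) → 1/(3 - 4p)` almost surely. -/
theorem erw_score_qv_diffusive
    {m0 : MeasurableSpace Ω} (μ : Measure Ω) [IsProbabilityMeasure μ]
    (ℱ : Filtration ℕ m0) (X : ℕ → Ω → ℝ) (p : ℝ)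
    (hERW : IsERW μ ℱ X p) (hp : 0 < p) (hp' : p < 3 / 4) :
    ∀ᵐ ω ∂μ, Tendsto (fun n : ℕ => (1 / Real.log n) *
        ∑ k ∈ Finset.Icc 1 (n - 1), (erwS X k ω / k) ^ 2 /
          (1 - (2 * p - 1) ^ 2 * (erwS X k ω / k) ^ 2))
      atTop (𝓝 (1 / (3 - 4 * p))) := by
  have hw : ContinuousAt (fun x : ℝ => (1 - (2 * p - 1) ^ 2 * x ^ 2)⁻¹) 0 :=
    ContinuousAt.inv₀ (by fun_prop) (by simp)
  simpa [div_eq_mul_inv] using erw_score_qv_diffusive_general μ ℱ X p hERW hp' hw
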